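/- Let E₂(q) = 1 − 24 Σ_{n=1}^∞ σ₁(n) qⁿ and F(q) = ∏_{n=1}^∞ (1 − qⁿ). Then for every complex number q with |q| < 1, one has ( 2 E₂(q²) − E₂(q) )² · F(q)⁸ · F(q²)⁸ = F(q)^{24} + 64 q · F(q²)^{24}. (Equivalently, with η(q) = q^{1/24}F(q), the square of the weight-2 modular form A₂²(q) = 2E₂(q²) − E₂(q) for Γ₀(2) satisfies A₂⁸ η(q)⁸η(q²)⁸ = η(q)^{24} + 2⁶ η(q²)^{24}, i.e. A₂² equals the eta-quotient (2⁶η(q²)^{24} + η(q)^{24})^{1/2} / (η(q)²η(q²)²).) -/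

import Mathlib

open scoped BigOperators

/-- The weight-2 Eisenstein series `E₂(q) = 1 − 24 Σ_{n=1}^∞ σ₁(n) qⁿ`. -/
noncomputable def E2 (q : ℂ) : ℂ :=
  1 - 24 * ∑' n : ℕ, (ArithmeticFunction.sigma 1 (n + 1) : ℂ) * q ^ (n + 1)

/-- The Euler product `F(q) = ∏_{n=1}^∞ (1 − qⁿ)`. -/
noncomputable def eulerF (q : ℂ) : ℂ := ∏' n : ℕ, (1 - q ^ (n + 1))

/-! Let `G` be `q` times the difference of the two sides. The transformation laws of `E₂` and `η`
show that `G` is a form of weight `12` for `Γ₀(2)` and an eigenfunction of the Fricke involution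
`z ↦ -1/(2z)`, and it is `O(q²)` because both sides are `1` at `q = 0`. The product of `G` over the
three cosets of `Γ₀(2)` in `SL(2, ℤ)` is then a modular form of level one and weight `36` which is
`O(q⁴)`. As a nonzero level one form of weight `k` vanishes to order at most `k/12` at infinity,
that product is zero, and so is one of its factors. -/

section

open Complex Filter Topology Asymptotics ModularForm MatrixGroups
open UpperHalfPlane hiding I
open scoped Manifold

local notation "𝕢" => Function.Periodic.qParam
local notation "𝔻" => Metric.ball (0 : ℂ) 1

lemma qParam_natCast_mul (h : ℝ) (n : ℕ) (z : ℂ) : 𝕢 h (n * z) = 𝕢 h z ^ n := by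
  rw [Function.Periodic.qParam, Function.Periodic.qParam, ← exp_nat_mul]
  ring_nf

lemma qParam_natCast_pow_self {n : ℕ} (hn : n ≠ 0) (z : ℂ) : 𝕢 n z ^ n = 𝕢 1 z := by
  rw [← qParam_natCast_mul, Function.Periodic.qParam, Function.Periodic.qParam]
  push_cast
  field_simp

lemma qParam_one_two_mul (z : ℂ) : 𝕢 1 (2 * z) = 𝕢 1 z ^ 2 :=
  mod_cast qParam_natCast_mul 1 2 z

lemma qParam_two_sq (z : ℂ) : 𝕢 2 z ^ 2 = 𝕢 1 z :=
  mod_cast qParam_natCast_pow_self two_ne_zero z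

lemma qParam_one_div_two (z : ℂ) : 𝕢 1 (z / 2) = 𝕢 2 z := by
  rw [Function.Periodic.qParam, Function.Periodic.qParam]
  push_cast
  ring_nf

lemma qParam_add_self {h : ℝ} (hh : h ≠ 0) (z : ℂ) : 𝕢 h (z + h) = 𝕢 h z := by
  have hh' : (h : ℂ) ≠ 0 := mod_cast hh
  rw [Function.Periodic.qParam, Function.Periodic.qParam, mul_add, add_div,
    mul_div_cancel_right₀ _ hh', exp_add, exp_two_pi_mul_I, mul_one]

lemma qParam_two_add_one (z : ℂ) : 𝕢 2 (z + 1) = -𝕢 2 z := by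
  rw [Function.Periodic.qParam, Function.Periodic.qParam,
    show 2 * (Real.pi : ℂ) * I * (z + 1) / (2 : ℝ)
      = 2 * Real.pi * I * z / (2 : ℝ) + Real.pi * I by push_cast; ring,
    exp_add, exp_pi_mul_I, mul_neg_one]

lemma ne_zero_of_im_pos {z : ℂ} (hz : 0 < z.im) : z ≠ 0 :=
  UpperHalfPlane.ne_zero ⟨z, hz⟩

lemma two_mul_neg_one_div (z : ℂ) : 2 * (-1 / (2 * z)) = -1 / z := by
  rw [← div_div, mul_div_assoc']
  ring

lemma neg_one_div_im_pos {z : ℂ} (hz : 0 < z.im) : 0 < (-1 / z).im := by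
  simpa [neg_div, inv_neg] using im_inv_neg_coe_pos ⟨z, hz⟩

lemma differentiableOn_comp_sq {G : ℂ → ℂ} (hG : DifferentiableOn ℂ G 𝔻) :
    DifferentiableOn ℂ (fun q ↦ G (q ^ 2)) 𝔻 :=
  hG.comp (by fun_prop) fun q hq ↦ by
    rw [mem_ball_zero_iff] at hq ⊢
    simpa using hq

lemma differentiableOn_comp_neg {G : ℂ → ℂ} (hG : DifferentiableOn ℂ G 𝔻) :
    DifferentiableOn ℂ (fun q ↦ G (-q)) 𝔻 :=
  hG.comp (by fun_prop) fun q hq ↦ by simpa using hq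

lemma mdifferentiable_comp_qParam {G : ℂ → ℂ} (hG : DifferentiableOn ℂ G 𝔻) {h : ℝ} (hh : 0 < h) :
    MDiff (fun τ : ℍ ↦ G (𝕢 h τ)) := by
  have hcomp : DifferentiableOn ℂ (fun z ↦ G (𝕢 h z)) {z | 0 < z.im} :=
    hG.comp (Function.Periodic.differentiable_qParam (h := h)).differentiableOn
      fun z hz ↦ mem_ball_zero_iff.mpr (Function.Periodic.norm_qParam_lt_one hh hz)
  rw [mdifferentiable_iff]
  exact hcomp.congr fun z hz ↦ by simp [ofComplex_apply_of_im_pos hz]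

lemma qParam_isBigO_discriminant : (fun τ : ℍ ↦ 𝕢 1 τ) =O[atImInfty] discriminant := by
  rw [← isBigO_norm_left]
  simpa [Function.Periodic.norm_qParam] using exp_isBigO_discriminant

lemma isZeroAtImInfty_of_isBigO_qParam_pow {f : ℍ → ℂ} {n : ℕ} (hn : n ≠ 0)
    (hf : f =O[atImInfty] fun τ : ℍ ↦ 𝕢 1 τ ^ n) : IsZeroAtImInfty f :=
  hf.trans_tendsto <| by simpa [hn] using (qParam_tendsto_atImInfty one_pos).pow n

/- Dividing by the discriminant lowers the weight by `12` and the order of vanishing by `1`. -/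
theorem modularForm_eq_zero_of_isBigO_qParam_pow {n : ℕ} {k : ℤ} (hk : k < 12 * n)
    (f : ModularForm 𝒮ℒ k) (hf : f =O[atImInfty] fun τ : ℍ ↦ 𝕢 1 τ ^ n) : f = 0 := by
  induction n generalizing k with
  | zero => exact DFunLike.coe_injective (ModularFormClass.levelOne_neg_weight_eq_zero hk f)
  | succ n ih =>
    have h_cusp : (qExpansion 1 f).coeff 0 = 0 := by
      rw [qExpansion_coeff_zero one_pos
        (ModularFormClass.analyticAt_cuspFunction_zero f one_pos one_mem_strictPeriods_SL)
        (SlashInvariantFormClass.periodic_comp_ofComplex f one_mem_strictPeriods_SL)]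
      exact (isZeroAtImInfty_of_isBigO_qParam_pow n.succ_ne_zero hf).valueAtInfty_eq_zero
    let g := CuspForm.discriminantEquiv (toCuspForm f h_cusp)
    have hg : g =O[atImInfty] fun τ : ℍ ↦ 𝕢 1 τ ^ n := by
      have hq : (fun τ : ℍ ↦ (𝕢 1 τ)⁻¹ * 𝕢 1 τ ^ (n + 1)) = fun τ : ℍ ↦ 𝕢 1 τ ^ n := by
        ext τ
        rw [pow_succ', inv_mul_cancel_left₀ (Function.Periodic.qParam_ne_zero _)]
      have hΔ : (fun τ ↦ (discriminant τ)⁻¹) =O[atImInfty] fun τ : ℍ ↦ (𝕢 1 τ)⁻¹ :=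
        qParam_isBigO_discriminant.inv_rev <|
          .of_forall fun τ h ↦ absurd h (Function.Periodic.qParam_ne_zero _)
      rw [← hq]
      refine (hΔ.mul hf).congr_left fun τ ↦ ?_
      rw [CuspForm.discriminantEquiv_apply, toCuspForm_apply, div_eq_inv_mul]
    have hg0 : g = 0 := ih (by push_cast at hk; linarith) g hg
    have hf0 : toCuspForm f h_cusp = 0 := CuspForm.discriminantEquiv.map_eq_zero_iff.mp hg0
    ext τ
    rw [← toCuspForm_apply f h_cusp, hf0]
    rfl

/-- `G`, holomorphic on the unit disc and read as a function of `q = exp (2πiz)`, transforms under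
the Fricke involution `z ↦ -1/(2z)` of level `2` in weight `k` with multiplier `c`. Since `Γ₀(2)` is
generated by `-1`, `z ↦ z + 1` and the Fricke conjugate of the latter, such a `G` of even weight
transforms like a modular form for `Γ₀(2)`. -/
structure IsFrickeEigenform (k : ℤ) (c : ℂ) (G : ℂ → ℂ) : Prop where
  differentiableOn : DifferentiableOn ℂ G 𝔻
  apply_fricke {z : ℂ} (hz : 0 < z.im) : G (𝕢 1 (-1 / (2 * z))) = c * z ^ k * G (𝕢 1 z)

/-- The norm of `G` from level `2` to level one, in terms of `p = exp (πiz)`. By the Fricke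
eigenproperty, the translates of `G` by the cosets of `Γ₀(2)` in `SL(2, ℤ)` are, up to constants,
`G` at `z`, `z/2` and `(z + 1)/2`, and these points have `q = p²`, `p` and `-p`. -/
def levelOneNorm (G : ℂ → ℂ) (p : ℂ) : ℂ := G (p ^ 2) * (G p * G (-p))

lemma levelOneNorm_neg (G : ℂ → ℂ) (p : ℂ) : levelOneNorm G (-p) = levelOneNorm G p := by
  simp only [levelOneNorm, neg_sq, neg_neg]
  ring

lemma levelOneNorm_add_one (G : ℂ → ℂ) (z : ℂ) :
    levelOneNorm G (𝕢 2 (z + 1)) = levelOneNorm G (𝕢 2 z) := by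
  rw [qParam_two_add_one, levelOneNorm_neg]

lemma levelOneNorm_differentiableOn {G : ℂ → ℂ} (hG : DifferentiableOn ℂ G 𝔻) :
    DifferentiableOn ℂ (levelOneNorm G) 𝔻 :=
  (differentiableOn_comp_sq hG).mul (hG.mul (differentiableOn_comp_neg hG))

lemma levelOneNorm_isBigO {G : ℂ → ℂ} {m : ℕ} (hG : G =O[𝓝 0] fun q ↦ q ^ m) :
    levelOneNorm G =O[𝓝 0] fun p ↦ p ^ (4 * m) := by
  have h_sq : Tendsto (fun p : ℂ ↦ p ^ 2) (𝓝 0) (𝓝 0) := by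
    simpa using (continuous_pow 2).tendsto (0 : ℂ)
  have h_neg : Tendsto (fun p : ℂ ↦ -p) (𝓝 0) (𝓝 0) := by simpa using continuous_neg.tendsto (0 : ℂ)
  refine ((hG.comp_tendsto h_sq).mul (hG.mul (hG.comp_tendsto h_neg))).trans
    (.of_bound 1 (.of_forall fun p ↦ le_of_eq ?_))
  simp only [Function.comp_apply, norm_mul, norm_pow, norm_neg]
  ring

namespace IsFrickeEigenform

variable {k l : ℤ} {c d : ℂ} {G H : ℂ → ℂ}

lemma mul (hG : IsFrickeEigenform k c G) (hH : IsFrickeEigenform l d H) :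
    IsFrickeEigenform (k + l) (c * d) (G * H) where
  differentiableOn := hG.differentiableOn.mul hH.differentiableOn
  apply_fricke {z} hz := by
    simp only [Pi.mul_apply]
    rw [hG.apply_fricke hz, hH.apply_fricke hz, zpow_add₀ (ne_zero_of_im_pos hz)]
    ring

lemma sub (hG : IsFrickeEigenform k c G) (hH : IsFrickeEigenform k c H) :
    IsFrickeEigenform k c (G - H) where
  differentiableOn := hG.differentiableOn.sub hH.differentiableOn
  apply_fricke {z} hz := by
    simp only [Pi.sub_apply]
    rw [hG.apply_fricke hz, hH.apply_fricke hz, mul_sub]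

lemma sq_mul_apply (hG : IsFrickeEigenform k c G) {z : ℂ} (hz : 0 < z.im) :
    c ^ 2 * G (𝕢 1 z) = (-2) ^ k * G (𝕢 1 z) := by
  have hz0 := ne_zero_of_im_pos hz
  have hWz : 0 < (-1 / (2 * z)).im := neg_one_div_im_pos (by simpa using hz)
  have hWW : -1 / (2 * (-1 / (2 * z))) = z := by field_simp
  have hWz_mul : -2 * (-1 / (2 * z) * z) = 1 := by field_simp
  have h := hG.apply_fricke hWz
  rw [hWW, hG.apply_fricke hz] at h
  calc c ^ 2 * G (𝕢 1 z)
      = (-2 * (-1 / (2 * z) * z)) ^ k * (c ^ 2 * G (𝕢 1 z)) := by rw [hWz_mul, one_zpow, one_mul]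
    _ = (-2) ^ k * (c * (-1 / (2 * z)) ^ k * (c * z ^ k * G (𝕢 1 z))) := by
      rw [mul_zpow, mul_zpow]
      ring
    _ = (-2) ^ k * G (𝕢 1 z) := by rw [← h]

/- `z / (1 - 2z)` is the conjugate of `z + 1` by the Fricke involution. -/
lemma apply_div_one_sub_two_mul (hG : IsFrickeEigenform k c G) {z : ℂ} (hz : 0 < z.im) :
    G (𝕢 1 (z / (1 - 2 * z))) = (1 - 2 * z) ^ k * G (𝕢 1 z) := by
  have hz0 := ne_zero_of_im_pos hz
  have hz1 : 2 * z - 1 ≠ 0 := ne_zero_of_im_pos (by simpa using hz)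
  have hWz : 0 < (-1 / (2 * z)).im := neg_one_div_im_pos (by simpa using hz)
  have hWz1 : -1 / (2 * z) + 1 = (2 * z - 1) / (2 * z) := by field_simp; ring
  have hconj : z / (1 - 2 * z) = -1 / (2 * (-1 / (2 * z) + 1)) := by
    rw [hWz1, ← neg_sub (2 * z) 1, div_neg]
    field_simp [hz1]
  have hT : 𝕢 1 (-1 / (2 * z) + 1) = 𝕢 1 (-1 / (2 * z)) := mod_cast qParam_add_self one_ne_zero _
  calc G (𝕢 1 (z / (1 - 2 * z)))
      = c * (-1 / (2 * z) + 1) ^ k * (c * z ^ k * G (𝕢 1 z)) := by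
        rw [hconj, hG.apply_fricke (by simpa using hWz), hT, hG.apply_fricke hz]
    _ = ((-1 / (2 * z) + 1) * z) ^ k * (c ^ 2 * G (𝕢 1 z)) := by
      rw [mul_zpow]
      ring
    _ = ((-1 / (2 * z) + 1) * z * -2) ^ k * G (𝕢 1 z) := by
      rw [hG.sq_mul_apply hz, mul_zpow _ (-2)]
      ring
    _ = (1 - 2 * z) ^ k * G (𝕢 1 z) := by
      congr 2
      field_simp
      ring

lemma levelOneNorm_neg_one_div (hG : IsFrickeEigenform k c G) {z : ℂ} (hz : 0 < z.im) :
    levelOneNorm G (𝕢 2 (-1 / z)) = z ^ (3 * k) * levelOneNorm G (𝕢 2 z) := by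
  have hz0 := ne_zero_of_im_pos hz
  have hz2 : 0 < (z / 2).im := by simpa using hz
  have hw : 0 < ((z + 1) / 2).im := by simpa using hz
  have h_sq : G (𝕢 2 (-1 / z) ^ 2) = c * (z / 2) ^ k * G (𝕢 2 z) := by
    rw [qParam_two_sq, ← qParam_one_div_two z, ← hG.apply_fricke hz2, mul_div_cancel₀ z two_ne_zero]
  have h_pos : G (𝕢 2 (-1 / z)) = c * z ^ k * G (𝕢 2 z ^ 2) := by
    rw [qParam_two_sq, ← hG.apply_fricke hz, ← qParam_one_div_two, div_div, mul_comm z]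
  have h_neg : G (-𝕢 2 (-1 / z)) = (-z) ^ k * G (-𝕢 2 z) := by
    have h_z : 1 - 2 * ((z + 1) / 2) = -z := by ring
    have h_arg : (-1 / z - 1) / 2 = (z + 1) / 2 / -z := by
      field_simp
      ring
    rw [← sub_add_cancel (-1 / z) 1, qParam_two_add_one, neg_neg, ← qParam_one_div_two, h_arg,
      ← h_z, hG.apply_div_one_sub_two_mul hw, qParam_one_div_two, qParam_two_add_one]
  calc levelOneNorm G (𝕢 2 (-1 / z))
      = (z / 2) ^ k * z ^ k * (-z) ^ k * (c ^ 2 * G (𝕢 1 z)) * (G (𝕢 2 z) * G (-𝕢 2 z)) := by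
        rw [levelOneNorm, h_sq, h_pos, h_neg, qParam_two_sq]
        ring
    _ = (z / 2 * z * -z * -2) ^ k * levelOneNorm G (𝕢 2 z) := by
      rw [hG.sq_mul_apply hz, mul_zpow _ (-2), mul_zpow, mul_zpow, levelOneNorm, qParam_two_sq]
      ring
    _ = z ^ (3 * k) * levelOneNorm G (𝕢 2 z) := by
      rw [zpow_mul, zpow_ofNat]
      ring_nf

lemma levelOneNorm_slash (hG : IsFrickeEigenform k c G) (A : SL(2, ℤ)) :
    (fun τ : ℍ ↦ levelOneNorm G (𝕢 2 τ)) ∣[3 * k] A = fun τ : ℍ ↦ levelOneNorm G (𝕢 2 τ) := by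
  refine SlashInvariantForm.slash_action_generators_SL2Z ?_ ?_ A
  · ext τ
    rw [SlashInvariantForm.slash_S_apply]
    have hτ : (τ : ℂ) ^ (3 * k) ≠ 0 := zpow_ne_zero _ τ.ne_zero
    have hS := hG.levelOneNorm_neg_one_div τ.im_pos
    rw [neg_div, one_div, ← inv_neg] at hS
    rw [hS, zpow_neg]
    field_simp
  · ext τ
    rw [SL_slash_apply, modular_T_smul]
    have h_denom : denom ModularGroup.T τ = 1 := by
      rw [ModularGroup.denom_apply]
      simp [ModularGroup.T]
    simpa [h_denom, add_comm] using levelOneNorm_add_one G τ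

/-- The norm of a Fricke eigenform as a modular form of level one, obtained by substituting
`p = exp (πiz)` in `levelOneNorm`. -/
noncomputable def normForm (hG : IsFrickeEigenform k c G) : ModularForm 𝒮ℒ (3 * k) where
  toFun τ := levelOneNorm G (𝕢 2 τ)
  slash_action_eq' A hA := by
    obtain ⟨A, rfl⟩ := hA
    exact hG.levelOneNorm_slash A
  holo' := mdifferentiable_comp_qParam (levelOneNorm_differentiableOn hG.differentiableOn) two_pos
  bdd_at_cusps' hc := by
    rw [Subgroup.IsArithmetic.isCusp_iff_isCusp_SL2Z] at hc
    rw [OnePoint.isBoundedAt_iff_forall_SL2Z hc]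
    intro γ _
    rw [hG.levelOneNorm_slash]
    have hN : ContinuousAt (levelOneNorm G) 0 :=
      (levelOneNorm_differentiableOn hG.differentiableOn).continuousOn.continuousAt
        (Metric.ball_mem_nhds 0 one_pos)
    exact (hN.tendsto.comp (qParam_tendsto_atImInfty two_pos)).isBigO_one ℝ

lemma normForm_isBigO (hG : IsFrickeEigenform k c G) {m : ℕ} (hm : G =O[𝓝 0] fun q ↦ q ^ m) :
    hG.normForm =O[atImInfty] fun τ : ℍ ↦ 𝕢 1 τ ^ (2 * m) := by
  refine ((levelOneNorm_isBigO hm).comp_tendsto (qParam_tendsto_atImInfty two_pos)).congr_right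
    fun τ ↦ ?_
  rw [Function.comp_apply, ← qParam_two_sq, ← pow_mul]
  ring_nf

theorem eq_zero_of_isBigO_pow (hG : IsFrickeEigenform k c G) {m : ℕ} (hk : k < 8 * m)
    (hm : G =O[𝓝 0] fun q ↦ q ^ m) {z : ℂ} (hz : 0 < z.im) : G (𝕢 1 z) = 0 := by
  have hN : hG.normForm = 0 :=
    modularForm_eq_zero_of_isBigO_qParam_pow (by push_cast; linarith) _ (hG.normForm_isBigO hm)
  have m_sq : MDiff (fun τ : ℍ ↦ G (𝕢 1 τ)) :=
    mdifferentiable_comp_qParam hG.differentiableOn one_pos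
  have m_pos : MDiff (fun τ : ℍ ↦ G (𝕢 2 τ)) :=
    mdifferentiable_comp_qParam hG.differentiableOn two_pos
  have m_neg : MDiff (fun τ : ℍ ↦ G (-𝕢 2 τ)) :=
    mdifferentiable_comp_qParam (differentiableOn_comp_neg hG.differentiableOn) two_pos
  have h_prod : (fun τ : ℍ ↦ G (𝕢 1 τ)) *
      ((fun τ : ℍ ↦ G (𝕢 2 τ)) * fun τ : ℍ ↦ G (-𝕢 2 τ)) = 0 := by
    ext τ
    exact (congrArg (G · * _) (qParam_two_sq _).symm).trans (DFunLike.congr_fun hN τ)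
  rw [mul_eq_zero_iff m_sq (m_pos.mul m_neg), mul_eq_zero_iff m_pos m_neg] at h_prod
  have h2z : 𝕢 2 (2 * z) = 𝕢 1 z := by
    rw [← qParam_one_div_two, mul_div_cancel_left₀ z two_ne_zero]
  rcases h_prod with h | h | h
  · exact congrFun h ⟨z, hz⟩
  · simpa [h2z] using congrFun h ⟨2 * z, by simpa using hz⟩
  · simpa [qParam_two_add_one, h2z] using congrFun h ⟨2 * z + 1, by simpa using hz⟩

end IsFrickeEigenform

lemma E2_zero : E2 0 = 1 := by simp [E2]

lemma eulerF_zero : eulerF 0 = 1 := by simp [eulerF]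

lemma eulerF_differentiableOn : DifferentiableOn ℂ eulerF 𝔻 :=
  differentiableOn_tprod_one_sub_pow

lemma E2_differentiableOn : DifferentiableOn ℂ E2 𝔻 := by
  intro q hq
  obtain ⟨r, hqr, hr⟩ := exists_between (mem_ball_zero_iff.mp hq)
  have hr0 : 0 ≤ r := (norm_nonneg q).trans hqr.le
  have h_geom : Summable fun n : ℕ ↦ (n : ℝ) ^ 2 * r ^ n :=
    summable_pow_mul_geometric_of_norm_lt_one 2 (by rwa [Real.norm_of_nonneg hr0])
  have h_series : DifferentiableOn ℂ
      (fun q ↦ ∑' n : ℕ, (ArithmeticFunction.sigma 1 (n + 1) : ℂ) * q ^ (n + 1))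
      (Metric.ball 0 r) := by
    refine differentiableOn_tsum_of_summable_norm ((summable_nat_add_iff 1).mpr h_geom)
      (fun n ↦ by fun_prop) Metric.isOpen_ball fun n w hw ↦ ?_
    rw [norm_mul, norm_pow, norm_natCast]
    gcongr
    · exact mod_cast ArithmeticFunction.sigma_le_pow_succ 1 (n + 1)
    · exact (mem_ball_zero_iff.mp hw).le
  have hE2 : DifferentiableOn ℂ E2 (Metric.ball 0 r) := by
    unfold E2
    exact (h_series.const_mul 24).const_sub 1
  exact (hE2.differentiableAt
    (Metric.isOpen_ball.mem_nhds (mem_ball_zero_iff.mpr hqr))).differentiableWithinAt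

lemma E2_qParam (τ : ℍ) : E2 (𝕢 1 τ) = EisensteinSeries.E2 τ := by
  rw [EisensteinSeries.E2_eq_tsum_cexp, E2, tsum_pnat_eq_tsum_succ
    (f := fun n ↦ (ArithmeticFunction.sigma 1 n : ℂ) * cexp (2 * Real.pi * I * τ) ^ n)]
  simp [Function.Periodic.qParam]

lemma E2_qParam_neg_one_div {z : ℂ} (hz : 0 < z.im) :
    E2 (𝕢 1 (-1 / z)) = z ^ 2 * E2 (𝕢 1 z) + 6 * z / (Real.pi * I) := by
  lift z to ℍ using hz
  have hS := congrFun (EisensteinSeries.E2_slash_action ModularGroup.S) z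
  have hz0 : (z : ℂ) ≠ 0 := z.ne_zero
  have hπ : (Real.pi : ℂ) ≠ 0 := ofReal_ne_zero.mpr Real.pi_ne_zero
  rw [SlashInvariantForm.slash_S_apply, Pi.sub_apply, Pi.smul_apply, ← E2_qParam, ← E2_qParam,
    coe_mk, smul_eq_mul, EisensteinSeries.D2_S, riemannZeta_two, zpow_neg, zpow_ofNat] at hS
  rw [neg_div, one_div, ← inv_neg]
  field_simp at hS ⊢
  linear_combination I * hS - 6 * z * I_sq

lemma eta_eq_qParam_mul_eulerF (z : ℂ) : η z = 𝕢 24 z * eulerF (𝕢 1 z) := rfl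

lemma sqrt_pow_two_mul (z : ℂ) (n : ℕ) : sqrt z ^ (2 * n) = z ^ n := by
  have h_sq : sqrt z ^ 2 = z := cpow_ofNat_inv_pow z 2
  rw [pow_mul, h_sq]

lemma eta_neg_one_div_pow_eight {z : ℂ} (hz : 0 < z.im) : η (-1 / z) ^ 8 = z ^ 4 * η z ^ 8 := by
  have h : η (-1 / z) = (sqrt I)⁻¹ * (sqrt z * η z) := eta_comp_eq_csqrt_I_inv hz
  have h_sqrt (w : ℂ) : sqrt w ^ 8 = w ^ 4 := sqrt_pow_two_mul w 4
  rw [h, mul_pow, mul_pow, inv_pow, h_sqrt, h_sqrt, I_pow_four, inv_one, one_mul]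

lemma eta_pow_twentyFour (z : ℂ) : η z ^ 24 = 𝕢 1 z * eulerF (𝕢 1 z) ^ 24 := by
  rw [eta_eq_qParam_mul_eulerF, mul_pow]
  congr 1
  exact mod_cast qParam_natCast_pow_self (n := 24) (by norm_num) z

lemma eta_mul_eta_two_mul_pow_eight (z : ℂ) :
    (η z * η (2 * z)) ^ 8 = 𝕢 1 z * (eulerF (𝕢 1 z) * eulerF (𝕢 1 z ^ 2)) ^ 8 := by
  have h24 : 𝕢 24 z ^ 24 = 𝕢 1 z := mod_cast qParam_natCast_pow_self (n := 24) (by norm_num) z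
  have h_two : 𝕢 24 (2 * z) = 𝕢 24 z ^ 2 := mod_cast qParam_natCast_mul 24 2 z
  rw [eta_eq_qParam_mul_eulerF, eta_eq_qParam_mul_eulerF, h_two, qParam_one_two_mul, ← h24]
  ring

lemma isFrickeEigenform_E2 : IsFrickeEigenform 2 (-2) fun q ↦ 2 * E2 (q ^ 2) - E2 q where
  differentiableOn :=
    ((differentiableOn_comp_sq E2_differentiableOn).const_mul 2).sub E2_differentiableOn
  apply_fricke {z} hz := by
    have h2z : 0 < (2 * z).im := by simpa using hz
    rw [← qParam_one_two_mul, ← qParam_one_two_mul, two_mul_neg_one_div,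
      E2_qParam_neg_one_div hz, E2_qParam_neg_one_div h2z, zpow_ofNat]
    ring

lemma isFrickeEigenform_eta_mul_eta :
    IsFrickeEigenform 8 16 fun q ↦ q * (eulerF q * eulerF (q ^ 2)) ^ 8 where
  differentiableOn := differentiableOn_id.mul <|
    (eulerF_differentiableOn.mul (differentiableOn_comp_sq eulerF_differentiableOn)).pow 8
  apply_fricke {z} hz := by
    have h2z : 0 < (2 * z).im := by simpa using hz
    rw [← eta_mul_eta_two_mul_pow_eight, ← eta_mul_eta_two_mul_pow_eight, two_mul_neg_one_div,
      mul_pow, eta_neg_one_div_pow_eight h2z, eta_neg_one_div_pow_eight hz, zpow_ofNat]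
    ring

lemma isFrickeEigenform_eta_add_eta :
    IsFrickeEigenform 12 64 fun q ↦ q * (eulerF q ^ 24 + 64 * q * eulerF (q ^ 2) ^ 24) where
  differentiableOn := by
    have h := eulerF_differentiableOn
    have h' := differentiableOn_comp_sq eulerF_differentiableOn
    fun_prop
  apply_fricke {z} hz := by
    have h2z : 0 < (2 * z).im := by simpa using hz
    have h_eta (w : ℂ) : 𝕢 1 w * (eulerF (𝕢 1 w) ^ 24 + 64 * 𝕢 1 w * eulerF (𝕢 1 w ^ 2) ^ 24) =
        (η w ^ 8) ^ 3 + 64 * (η (2 * w) ^ 8) ^ 3 := by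
      rw [← pow_mul, ← pow_mul, eta_pow_twentyFour, eta_pow_twentyFour, qParam_one_two_mul]
      ring
    rw [h_eta, h_eta, two_mul_neg_one_div, eta_neg_one_div_pow_eight h2z,
      eta_neg_one_div_pow_eight hz, zpow_ofNat]
    ring

/-- The difference of the two sides of `A2_sq_eta_identity`. -/
noncomputable def a2EtaDefect (q : ℂ) : ℂ :=
  (2 * E2 (q ^ 2) - E2 q) ^ 2 * eulerF q ^ 8 * eulerF (q ^ 2) ^ 8
    - (eulerF q ^ 24 + 64 * q * eulerF (q ^ 2) ^ 24)

lemma a2EtaDefect_zero : a2EtaDefect 0 = 0 := by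
  norm_num [a2EtaDefect, E2_zero, eulerF_zero]

lemma a2EtaDefect_differentiableOn : DifferentiableOn ℂ a2EtaDefect 𝔻 := by
  have hE := E2_differentiableOn
  have hE' := differentiableOn_comp_sq E2_differentiableOn
  have hF := eulerF_differentiableOn
  have hF' := differentiableOn_comp_sq eulerF_differentiableOn
  unfold a2EtaDefect
  fun_prop

lemma isFrickeEigenform_a2EtaDefect : IsFrickeEigenform 12 64 fun q ↦ q * a2EtaDefect q := by
  have h_lhs : IsFrickeEigenform 12 64
      fun q ↦ q * ((2 * E2 (q ^ 2) - E2 q) ^ 2 * eulerF q ^ 8 * eulerF (q ^ 2) ^ 8) := by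
    convert (isFrickeEigenform_E2.mul isFrickeEigenform_E2).mul isFrickeEigenform_eta_mul_eta
      using 1
    · norm_num
    · norm_num
    · ext q
      simp only [Pi.mul_apply]
      ring
  convert h_lhs.sub isFrickeEigenform_eta_add_eta using 1
  ext q
  rw [Pi.sub_apply, a2EtaDefect, mul_sub]

lemma isBigO_mul_a2EtaDefect : (fun q ↦ q * a2EtaDefect q) =O[𝓝 0] fun q ↦ q ^ 2 := by
  have h : a2EtaDefect =O[𝓝 0] fun q ↦ q := by
    simpa [a2EtaDefect_zero] using (a2EtaDefect_differentiableOn.differentiableAt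
      (Metric.ball_mem_nhds 0 one_pos)).isBigO_sub
  simpa only [sq] using (isBigO_refl (fun q : ℂ ↦ q) (𝓝 0)).mul h

end

/-- `(2E₂(q²) − E₂(q))² F(q)⁸ F(q²)⁸ = F(q)²⁴ + 64 q F(q²)²⁴`, i.e.
`A₂⁴ η(q)⁸η(q²)⁸ = η(q)²⁴ + 2⁶η(q²)²⁴` for the generator `A₂² = 2E₂(q²) − E₂(q)`
of weight-2 modular forms for `Γ₀(2)`. -/
theorem A2_sq_eta_identity (q : ℂ) (hq : ‖q‖ < 1) :
    (2 * E2 (q ^ 2) - E2 q) ^ 2 * eulerF q ^ 8 * eulerF (q ^ 2) ^ 8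
      = eulerF q ^ 24 + 64 * q * eulerF (q ^ 2) ^ 24 := by
  suffices h : a2EtaDefect q = 0 from sub_eq_zero.mp h
  rcases eq_or_ne q 0 with rfl | hq0
  · exact a2EtaDefect_zero
  · have him := Function.Periodic.im_invQParam_pos_of_norm_lt_one one_pos hq hq0
    have h := isFrickeEigenform_a2EtaDefect.eq_zero_of_isBigO_pow (by norm_num)
      isBigO_mul_a2EtaDefect him
    rw [Function.Periodic.qParam_right_inv one_ne_zero hq0] at h
    exact (mul_eq_zero.mp h).resolve_left hq0
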